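/- For integers p ≥ 0, k ≥ 0, m > 0, n > 0, the integral W^{p,k}_{0,m,n} = ∫_{S²} Y_{p,0} Y_{k,m} Y_{k,n} dS equals δ_{m,n} C_{p,k} (−1)^m (p k k; 0 0 0)(p k k; 0 m −m), where C_{p,k} = (2k+1)√(2p+1)/√(4π) and (ℓ₁ ℓ₂ ℓ₃; m₁ m₂ m₃) denotes the Wigner 3-j symbol. -/

import Mathlib

open scoped Real

noncomputable section

/-- Factorial extended to integers: zero for negative arguments. -/
def fact' (z : ℤ) : ℝ := if z < 0 then 0 else (Nat.factorial z.toNat : ℝ)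

/-- The Wigner 3-j symbol, defined via the Racah formula. -/
def w3j (l1 l2 l3 : ℕ) (m1 m2 m3 : ℤ) : ℝ :=
  if m1 + m2 + m3 = 0 ∧ |m1| ≤ (l1 : ℤ) ∧ |m2| ≤ (l2 : ℤ) ∧ |m3| ≤ (l3 : ℤ) ∧
      (l3 : ℤ) ≤ (l1 : ℤ) + (l2 : ℤ) ∧ |(l1 : ℤ) - (l2 : ℤ)| ≤ (l3 : ℤ) then
    (-1 : ℝ) ^ ((l1 : ℤ) - (l2 : ℤ) - m3) *
      Real.sqrt ((fact' ((l1 : ℤ) + l2 - l3) * fact' ((l1 : ℤ) - l2 + l3) *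
          fact' (-(l1 : ℤ) + l2 + l3) * fact' ((l1 : ℤ) - m1) * fact' ((l1 : ℤ) + m1) *
          fact' ((l2 : ℤ) - m2) * fact' ((l2 : ℤ) + m2) * fact' ((l3 : ℤ) - m3) *
          fact' ((l3 : ℤ) + m3)) / fact' ((l1 : ℤ) + l2 + l3 + 1)) *
      ∑ t ∈ Finset.range (l1 + l2 + l3 + 1),
        (-1 : ℝ) ^ t /
          (fact' t * fact' ((l3 : ℤ) - l2 + m1 + t) * fact' ((l3 : ℤ) - l1 - m2 + t) *
            fact' ((l1 : ℤ) + l2 - l3 - t) * fact' ((l1 : ℤ) - m1 - t) *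
            fact' ((l2 : ℤ) + m2 - t))
  else 0

/-- Associated Legendre function via the Rodrigues formula. -/
def assocLegendre (l : ℕ) (m : ℤ) (x : ℝ) : ℝ :=
  ((-1 : ℝ) ^ m / ((2 : ℝ) ^ l * (Nat.factorial l : ℝ))) * (1 - x ^ 2) ^ ((m : ℝ) / 2) *
    iteratedDeriv (m + l).toNat (fun y : ℝ => (y ^ 2 - 1) ^ l) x

/-- Complex spherical harmonic of degree `l` and order `m`. -/
def Ysph (l : ℕ) (m : ℤ) (θ φ : ℝ) : ℂ :=
  ((Real.sqrt ((2 * l + 1) / (4 * Real.pi) * (fact' ((l : ℤ) - m) / fact' ((l : ℤ) + m))) *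
      assocLegendre l m (Real.cos θ) : ℝ) : ℂ) * Complex.exp (Complex.I * m * φ)

/-- Real spherical harmonic of degree `l` and order `m`. -/
def Yre (l : ℕ) (m : ℤ) (θ φ : ℝ) : ℝ :=
  if m < 0 then
    (Complex.I / (Real.sqrt 2 : ℂ) * (Ysph l m θ φ - (-1 : ℂ) ^ m * Ysph l (-m) θ φ)).re
  else if m = 0 then (Ysph l 0 θ φ).re
  else ((1 / (Real.sqrt 2 : ℂ)) * (Ysph l (-m) θ φ + (-1 : ℂ) ^ m * Ysph l m θ φ)).re

/-- Integral over the unit sphere in spherical coordinates, `dS = sin θ dφ dθ`. -/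
def sphInt (f : ℝ → ℝ → ℝ) : ℝ :=
  ∫ θ in (0 : ℝ)..Real.pi, ∫ φ in (0 : ℝ)..(2 * Real.pi), f θ φ * Real.sin θ

end

open Polynomial

/-- Reciprocal factorial on the integers, vanishing at negative arguments. -/
noncomputable def rfact (z : ℤ) : ℝ := (fact' z)⁻¹

lemma fact'_natCast (n : ℕ) : fact' n = n.factorial := by
  simp [fact']

lemma fact'_of_neg {z : ℤ} (h : z < 0) : fact' z = 0 := by
  simp [fact', h]

lemma rfact_of_neg {z : ℤ} (h : z < 0) : rfact z = 0 := by
  simp [rfact, fact'_of_neg h]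

lemma rfact_natCast (n : ℕ) : rfact n = ((n.factorial : ℝ))⁻¹ := by
  simp [rfact, fact'_natCast]

lemma rfact_sub_one (z : ℤ) : rfact (z - 1) = z * rfact z := by
  rcases lt_trichotomy z 0 with h | rfl | h
  · rw [rfact_of_neg h, rfact_of_neg (by omega), mul_zero]
  · rw [rfact_of_neg (by omega)]; simp
  · obtain ⟨n, rfl⟩ : ∃ n : ℕ, z = (n : ℤ) + 1 := ⟨(z - 1).toNat, by omega⟩
    have h1 := rfact_natCast (n + 1)
    push_cast at h1
    rw [add_sub_cancel_right, h1, rfact_natCast, Nat.factorial_succ]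
    have : (n.factorial : ℝ) ≠ 0 := by positivity
    push_cast
    field_simp

lemma rfact_eq (z : ℤ) : rfact z = (z + 1) * rfact (z + 1) := by
  have := rfact_sub_one (z + 1)
  rw [add_sub_cancel_right] at this
  rw [this]; push_cast; ring

/-- The alternating sum in the Racah formula for the symbol `(p k k; 0 m -m)`. -/
noncomputable def racahSum (p k : ℕ) (m : ℤ) : ℝ :=
  ∑ t ∈ Finset.range (p + 1), (-1 : ℝ) ^ t * rfact t ^ 2 * rfact (p - t) ^ 2 *
    rfact (k - p - m + t) * rfact (k + m - t)

/-- Telescoping of `t² (a + t) H(t)`, where `H` is the summand of a Racah sum. -/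
lemma sum_telescope (p : ℕ) (a b : ℤ) :
    ∑ t ∈ Finset.range (p + 1), ((p - t : ℝ) ^ 2 * (b - t) + t ^ 2 * (a + t)) *
      ((-1 : ℝ) ^ t * rfact t ^ 2 * rfact (p - t) ^ 2 * rfact (a + t) * rfact (b - t)) = 0 := by
  let G : ℕ → ℝ := fun t => -((t : ℝ) ^ 2 * (a + t) *
      ((-1 : ℝ) ^ t * rfact t ^ 2 * rfact (p - t) ^ 2 * rfact (a + t) * rfact (b - t)))
  have hG : ∀ t : ℕ, ((p - t : ℝ) ^ 2 * (b - t) + t ^ 2 * (a + t)) *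
      ((-1 : ℝ) ^ t * rfact t ^ 2 * rfact (p - t) ^ 2 * rfact (a + t) * rfact (b - t))
      = G (t + 1) - G t := by
    intro t
    have h1 := rfact_eq t
    have h2 := rfact_sub_one (p - t)
    have h3 := rfact_eq (a + t)
    have h4 := rfact_sub_one (b - t)
    simp only [G]
    push_cast at h1 h2 h3 h4 ⊢
    rw [← sub_sub (p : ℤ), ← sub_sub b, ← add_assoc a, h2, h4, h1, h3]
    ring
  rw [Finset.sum_congr rfl fun t _ => hG t, Finset.sum_range_sub]
  have : rfact (-1) = 0 := rfact_of_neg (by omega)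
  simp [G, this]

/-- Three-term recurrence in `m`. -/
lemma racahSum_recurrence (p k : ℕ) (m : ℤ) :
    ((p : ℝ) * (p + 1) - (k - m) * (k + m + 1) - (k - m + 1) * (k + m)) * racahSum p k m +
      (k + m + 1) ^ 2 * racahSum p k (m + 1) + (k - m + 1) ^ 2 * racahSum p k (m - 1) = 0 := by
  have h := sum_telescope p (k - p - m + 1) (k + m + 1)
  have h' := congrArg (fun x => (2 * (k : ℝ) - p + 1) * x) h
  simp only [mul_zero] at h'
  rw [← h']
  simp only [racahSum, Finset.mul_sum, ← Finset.sum_add_distrib]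
  refine Finset.sum_congr rfl fun t _ => ?_
  have e1 : (k : ℤ) - p - (m + 1) + t = (k - p - m + 1 + t) - 1 - 1 := by ring
  have e2 : (k : ℤ) - p - m + t = (k - p - m + 1 + t) - 1 := by ring
  have e3 : (k : ℤ) - p - (m - 1) + t = k - p - m + 1 + t := by ring
  have e4 : (k : ℤ) + (m - 1) - t = (k + m + 1 - t) - 1 - 1 := by ring
  have e5 : (k : ℤ) + m - t = (k + m + 1 - t) - 1 := by ring
  have e6 : (k : ℤ) + (m + 1) - t = k + m + 1 - t := by ring
  rw [e1, e2, e3, e4, e5, e6]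
  simp only [rfact_sub_one]
  push_cast
  ring

/-- First-order recurrence in `k` at `m = 0`. -/
lemma racahSum_zero_recurrence (p k : ℕ) :
    (2 * (k : ℝ) + 2 - p) * (k + 1) ^ 2 * racahSum p (k + 1) 0 =
      (2 * k + 2 + p) * racahSum p k 0 := by
  have h := sum_telescope p (k - p + 1) (k + 1)
  rw [← sub_eq_zero, ← h]
  simp only [racahSum, Finset.mul_sum, ← Finset.sum_sub_distrib]
  refine Finset.sum_congr rfl fun t _ => ?_
  have e1 : ((k + 1 : ℕ) : ℤ) - p - 0 + t = k - p + 1 + t := by push_cast; ring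
  have e2 : (k : ℤ) - p - 0 + t = (k - p + 1 + t) - 1 := by ring
  have e5 : (k : ℤ) + 0 - t = (k + 1 - t) - 1 := by ring
  have e6 : ((k + 1 : ℕ) : ℤ) + 0 - t = k + 1 - t := by push_cast; ring
  rw [e1, e2, e5, e6]
  simp only [rfact_sub_one]
  push_cast
  ring

lemma racahSum_neg_self (p k : ℕ) :
    racahSum p k (-k) = rfact p ^ 2 * rfact (2 * k - p) := by
  rw [racahSum, Finset.sum_eq_single 0]
  · have e : (k : ℤ) - p - -k + (0 : ℕ) = 2 * k - p := by push_cast; ring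
    have := rfact_natCast 0
    rw [e]; simp_all
  · intro t _ ht
    rw [rfact_of_neg (z := (k : ℤ) + -k - t) (by omega), mul_zero]
  · simp

lemma racahSum_two_mul (s : ℕ) :
    racahSum (2 * s) s 0 = (-1) ^ s * rfact s ^ 4 := by
  rw [racahSum, Finset.sum_eq_single s]
  · have e1 : ((2 * s : ℕ) : ℤ) - s = s := by push_cast; ring
    have e2 : (s : ℤ) - (2 * s : ℕ) - 0 + s = (0 : ℕ) := by push_cast; ring
    have e3 : (s : ℤ) + 0 - s = (0 : ℕ) := by push_cast; ring
    have := rfact_natCast 0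
    rw [e1, e2, e3, this]; simp; ring
  · intro t _ ht
    rcases lt_or_gt_of_ne ht with h | h
    · rw [rfact_of_neg (z := (s : ℤ) - (2 * s : ℕ) - 0 + t) (by push_cast; omega)]; simp
    · rw [rfact_of_neg (z := (s : ℤ) + 0 - t) (by omega), mul_zero]
  · intro h; exact absurd (Finset.mem_range.2 (by omega)) h

lemma racahSum_eq_zero {p k : ℕ} (h : 2 * k < p) (m : ℤ) : racahSum p k m = 0 := by
  refine Finset.sum_eq_zero fun t _ => ?_
  rcases lt_or_ge ((k : ℤ) - p - m + t) 0 with h1 | h1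
  · simp [rfact_of_neg h1]
  · rw [rfact_of_neg (z := (k : ℤ) + m - t) (by omega), mul_zero]

lemma racahSum_of_add_neg {p k : ℕ} {m : ℤ} (h : k + m < 0) : racahSum p k m = 0 := by
  refine Finset.sum_eq_zero fun t _ => ?_
  rw [rfact_of_neg (z := (k : ℤ) + m - t) (by omega), mul_zero]

/-- The `j`-th derivative of `(X² - 1) ^ k`. -/
noncomputable def rodrigues (k j : ℕ) : ℝ[X] := derivative^[j] ((X ^ 2 - 1) ^ k)

/-- Integral of a polynomial over `[-1, 1]`. -/
noncomputable def polyInt (q : ℝ[X]) : ℝ := ∫ x in (-1 : ℝ)..1, q.eval x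

lemma rodrigues_zero (k : ℕ) : rodrigues k 0 = (X ^ 2 - 1) ^ k := rfl

lemma derivative_rodrigues (k j : ℕ) : derivative (rodrigues k j) = rodrigues k (j + 1) := by
  rw [rodrigues, rodrigues, Function.iterate_succ_apply']

lemma mul_derivative_rodrigues_pred (k j : ℕ) :
    (j : ℝ[X]) * derivative (rodrigues k (j - 1)) = j * rodrigues k j := by
  cases j with
  | zero => simp
  | succ j => simp [derivative_rodrigues]

lemma rodrigues_one (k : ℕ) : (X ^ 2 - 1) * rodrigues k 1 = 2 * (k : ℝ[X]) * X * rodrigues k 0 := by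
  cases k with
  | zero => simp [rodrigues]
  | succ k =>
    simp only [rodrigues, Function.iterate_succ_apply', Function.iterate_zero_apply,
      derivative_pow_succ, derivative_sub, derivative_X, derivative_one]
    push_cast
    simp only [map_add, map_natCast, map_one]
    ring

lemma rodrigues_add_two (k j : ℕ) : (X ^ 2 - 1) * rodrigues k (j + 2) =
    2 * ((k : ℝ[X]) - (j : ℝ[X]) - 1) * X * rodrigues k (j + 1) +
      ((j : ℝ[X]) + 1) * (2 * (k : ℝ[X]) - (j : ℝ[X])) * rodrigues k j := by
  induction j with
  | zero =>
    have h := congrArg derivative (rodrigues_one k)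
    simp only [derivative_mul, derivative_rodrigues, derivative_sub, derivative_X_pow,
      derivative_one, derivative_X, derivative_natCast, derivative_ofNat, map_natCast,
      zero_add] at h ⊢
    push_cast at h ⊢
    linear_combination h
  | succ j ih =>
    have h := congrArg derivative ih
    simp only [derivative_mul, derivative_add, derivative_rodrigues, derivative_sub,
      derivative_X_pow, derivative_one, derivative_X, derivative_natCast, derivative_ofNat,
      map_natCast] at h ⊢
    push_cast at h ⊢
    linear_combination h

lemma rodrigues_rel (k j : ℕ) : (X ^ 2 - 1) * rodrigues k (j + 1) =
    2 * ((k : ℝ[X]) - (j : ℝ[X])) * X * rodrigues k j +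
      (j : ℝ[X]) * (2 * (k : ℝ[X]) - (j : ℝ[X]) + 1) * rodrigues k (j - 1) := by
  cases j with
  | zero => rw [rodrigues_one]; push_cast; ring
  | succ j => rw [rodrigues_add_two, Nat.add_sub_cancel]; push_cast; ring

lemma legendreOp_mul (k i j : ℕ) (h : i + j = 2 * k) :
    derivative ((X ^ 2 - 1) * derivative (rodrigues k i * rodrigues k j)) =
      ((i * (j + 1) + j * (i + 1) : ℕ) : ℝ[X]) * (rodrigues k i * rodrigues k j) +
      ((i * (j + 1) : ℕ) : ℝ[X]) * (rodrigues k (i - 1) * rodrigues k (j + 1)) +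
      ((j * (i + 1) : ℕ) : ℝ[X]) * (rodrigues k (i + 1) * rodrigues k (j - 1)) := by
  have hk : (i : ℝ[X]) + j = 2 * k := by exact_mod_cast h
  have e : (X ^ 2 - 1) * derivative (rodrigues k i * rodrigues k j) =
      ((j + 1 : ℕ) : ℝ[X]) * (((i : ℝ[X]) * rodrigues k (i - 1)) * rodrigues k j) +
      ((i + 1 : ℕ) : ℝ[X]) * (rodrigues k i * ((j : ℝ[X]) * rodrigues k (j - 1))) := by
    rw [derivative_mul, derivative_rodrigues, derivative_rodrigues]
    push_cast
    linear_combination rodrigues k j * rodrigues_rel k i + rodrigues k i * rodrigues_rel k j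
      + (-2 * X * rodrigues k i * rodrigues k j - i * rodrigues k (i - 1) * rodrigues k j
        - j * rodrigues k (j - 1) * rodrigues k i) * hk
  rw [e]
  simp only [derivative_mul, derivative_add, derivative_natCast, zero_mul, zero_add,
    derivative_rodrigues k i, derivative_rodrigues k j, mul_derivative_rodrigues_pred]
  push_cast
  ring

lemma legendreOp_self (p : ℕ) :
    derivative ((X ^ 2 - 1) * derivative (rodrigues p p)) =
      ((p * (p + 1) : ℕ) : ℝ[X]) * rodrigues p p := by
  have e : (X ^ 2 - 1) * derivative (rodrigues p p) =
      ((p + 1 : ℕ) : ℝ[X]) * ((p : ℝ[X]) * rodrigues p (p - 1)) := by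
    rw [derivative_rodrigues, rodrigues_rel]; push_cast; ring
  rw [e, derivative_mul, derivative_mul]
  simp only [derivative_natCast, zero_mul, zero_add, mul_derivative_rodrigues_pred]
  push_cast
  ring

lemma legendreOp_pow (k : ℕ) :
    derivative ((X ^ 2 - 1) * derivative (rodrigues (k + 1) 0)) =
      ((2 * (k + 1) * (2 * k + 3) : ℕ) : ℝ[X]) * rodrigues (k + 1) 0 +
        ((4 * (k + 1) ^ 2 : ℕ) : ℝ[X]) * rodrigues k 0 := by
  rw [derivative_rodrigues, rodrigues_one]
  simp only [rodrigues_zero, derivative_mul, derivative_natCast, derivative_ofNat, derivative_X,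
    derivative_pow_succ, derivative_sub, derivative_X, derivative_one]
  push_cast
  simp only [map_add, map_natCast, map_one]
  ring

/-- Reflection of the order of an associated Legendre function. -/
lemma rodrigues_reflect (k m : ℕ) (h : m ≤ k) :
    ((k + m).factorial : ℝ[X]) * rodrigues k (k - m) =
      ((k - m).factorial : ℝ[X]) * ((X ^ 2 - 1) ^ m * rodrigues k (k + m)) := by
  induction m using Nat.twoStepInduction with
  | zero => simp
  | one =>
    obtain ⟨k, rfl⟩ : ∃ n, k = n + 1 := ⟨k - 1, by omega⟩
    have := rodrigues_add_two (k + 1) k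
    rw [pow_one, this]
    simp only [Nat.add_sub_cancel, Nat.factorial_succ]
    push_cast
    ring
  | more m ih1 ih2 =>
    obtain ⟨d, rfl⟩ : ∃ d, k = d + m + 2 := ⟨k - m - 2, by omega⟩
    have h1 := ih1 (by omega)
    have h2 := ih2 (by omega)
    have r1 := rodrigues_add_two (d + m + 2) d
    have r2 := rodrigues_add_two (d + m + 2) (d + m + 2 + m)
    rw [show d + m + 2 - m = d + 2 by omega, Nat.factorial_succ (d + 1), Nat.factorial_succ d] at h1
    rw [show d + m + 2 - (m + 1) = d + 1 by omega, Nat.factorial_succ d,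
      show d + m + 2 + (m + 1) = d + m + 2 + m + 1 by ring,
      Nat.factorial_succ (d + m + 2 + m)] at h2
    rw [show d + m + 2 - (m + 2) = d by omega,
      show d + m + 2 + (m + 2) = d + m + 2 + m + 1 + 1 by ring,
      Nat.factorial_succ (d + m + 2 + m + 1), Nat.factorial_succ (d + m + 2 + m)]
    have hd : ((d + 1 : ℕ) : ℝ[X]) ≠ 0 := by exact_mod_cast Nat.succ_ne_zero d
    apply mul_left_cancel₀ hd
    push_cast at h1 h2 r1 r2 ⊢
    set y : ℝ[X] := X ^ 2 - 1
    set F := ((d + m + 2 + m).factorial : ℝ[X])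
    set G := (d.factorial : ℝ[X])
    linear_combination (-(F * (d + m + 2 + m + 1))) * r1 + y * (d + m + 2 + m + 1) * h1
      - 2 * (m + 1) * X * h2 - (d + 1) * G * y ^ (m + 1) * r2

lemma polyInt_add (f g : ℝ[X]) : polyInt (f + g) = polyInt f + polyInt g := by
  simp only [polyInt, eval_add]
  exact intervalIntegral.integral_add (f.continuous.intervalIntegrable _ _)
    (g.continuous.intervalIntegrable _ _)

lemma polyInt_natCast_mul (n : ℕ) (f : ℝ[X]) : polyInt (n * f) = n * polyInt f := by
  simp [polyInt, eval_mul, eval_natCast]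

lemma polyInt_derivative (f : ℝ[X]) : polyInt (derivative f) = f.eval 1 - f.eval (-1) :=
  intervalIntegral.integral_eq_sub_of_hasDerivAt (fun x _ => f.hasDerivAt x)
    ((derivative f).continuous.intervalIntegrable _ _)

lemma polyInt_sub (f g : ℝ[X]) : polyInt (f - g) = polyInt f - polyInt g := by
  have := polyInt_add (f - g) g
  rw [sub_add_cancel] at this
  linarith

lemma polyInt_legendreOp (f g : ℝ[X]) :
    polyInt (f * derivative ((X ^ 2 - 1) * derivative g)) =
      polyInt (derivative ((X ^ 2 - 1) * derivative f) * g) := by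
  have h := polyInt_derivative ((X ^ 2 - 1) * (f * derivative g - derivative f * g))
  have e : derivative ((X ^ 2 - 1) * (f * derivative g - derivative f * g)) =
      f * derivative ((X ^ 2 - 1) * derivative g) -
        derivative ((X ^ 2 - 1) * derivative f) * g := by
    simp only [derivative_mul, derivative_sub]
    ring
  rw [e, polyInt_sub] at h
  simp only [eval_mul, eval_sub, eval_pow, eval_X, eval_one] at h
  linarith

lemma rodrigues_eval_eq_zero {n j : ℕ} (h : j < n) {x : ℝ} (hx : x ^ 2 = 1) :
    (rodrigues n j).eval x = 0 := by
  obtain ⟨q, hq⟩ := pow_sub_dvd_iterate_derivative_pow (X ^ 2 - 1 : ℝ[X]) n j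
  have : n - j ≠ 0 := by omega
  simp [rodrigues, hq, hx, this]

lemma polyInt_rodrigues_mul (n i : ℕ) (h : i ≤ n) (q : ℝ[X]) :
    polyInt (rodrigues n i * q) = (-1) ^ i * polyInt (rodrigues n 0 * derivative^[i] q) := by
  induction i generalizing q with
  | zero => simp
  | succ i ih =>
    have h1 := polyInt_derivative (rodrigues n i * q)
    rw [derivative_mul, derivative_rodrigues, polyInt_add, ih (by omega), eval_mul, eval_mul,
      rodrigues_eval_eq_zero (by omega) (by norm_num),
      rodrigues_eval_eq_zero (by omega) (by norm_num)] at h1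
    rw [Function.iterate_succ_apply, pow_succ]
    linarith

lemma rodrigues_top (k : ℕ) : rodrigues k (2 * k) = ((2 * k).factorial : ℝ[X]) := by
  have hm : ((X ^ 2 - 1 : ℝ[X]) ^ k).Monic := by
    apply Monic.pow; monicity!
  have hd : ((X ^ 2 - 1 : ℝ[X]) ^ k).natDegree = 2 * k := by
    rw [natDegree_pow, mul_comm, show (X ^ 2 - 1 : ℝ[X]).natDegree = 2 by compute_degree!]
  have h0 : (rodrigues k (2 * k)).natDegree = 0 := by
    have := natDegree_iterate_derivative ((X ^ 2 - 1 : ℝ[X]) ^ k) (2 * k)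
    rw [hd, Nat.sub_self] at this
    exact Nat.le_zero.1 this
  rw [eq_C_of_natDegree_eq_zero h0, rodrigues, coeff_iterate_derivative, zero_add,
    Nat.descFactorial_self, ← hd, hm.coeff_natDegree]
  simp

lemma polyInt_pow_recurrence (p k : ℕ) :
    ((p : ℝ) - 2 * k - 2) * (p + 2 * k + 3) * polyInt (rodrigues p p * rodrigues (k + 1) 0) =
      4 * (k + 1) ^ 2 * polyInt (rodrigues p p * rodrigues k 0) := by
  have h := polyInt_legendreOp (rodrigues p p) (rodrigues (k + 1) 0)
  rw [legendreOp_self, legendreOp_pow, mul_add, mul_left_comm, mul_left_comm _ (Nat.cast _),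
    polyInt_add, mul_assoc _ (rodrigues p p), polyInt_natCast_mul, polyInt_natCast_mul, polyInt_natCast_mul] at h
  push_cast at h
  linear_combination -h

lemma polyInt_pow_zero {p : ℕ} (hp : p ≠ 0) :
    polyInt (rodrigues p p * rodrigues 0 0) = 0 := by
  have h := polyInt_legendreOp (rodrigues p p) (rodrigues 0 0)
  rw [legendreOp_self p, mul_assoc _ (rodrigues p p), polyInt_natCast_mul] at h
  have e : derivative (rodrigues 0 0) = 0 := by simp [rodrigues]
  simp only [e, mul_zero, derivative_zero] at h
  have h0 : polyInt 0 = 0 := by simp [polyInt]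
  rw [h0, eq_comm, mul_eq_zero] at h
  exact h.resolve_left (by positivity)

lemma polyInt_rodrigues_zero (n : ℕ) : polyInt (rodrigues n 0) =
    (-1) ^ n * 2 ^ (2 * n + 1) * (n.factorial : ℝ) ^ 2 / (2 * n + 1).factorial := by
  induction n with
  | zero => simp [rodrigues, polyInt]; norm_num
  | succ n ih =>
    have h := polyInt_pow_recurrence 0 n
    have e : rodrigues 0 0 = 1 := by simp [rodrigues]
    rw [e, one_mul, one_mul, ih] at h
    have h1 : ((2 * n + 1).factorial : ℝ) ≠ 0 := by positivity
    rw [show 2 * (n + 1) + 1 = 2 * n + 1 + 1 + 1 by ring, Nat.factorial_succ (2 * n + 1 + 1),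
      Nat.factorial_succ (2 * n + 1), Nat.factorial_succ n]
    push_cast at h ⊢
    have h2 : (2 * (n : ℝ) + 2) * (2 * n + 3) ≠ 0 := by positivity
    apply mul_left_cancel₀ h2
    field_simp at h ⊢
    linear_combination -h

lemma polyInt_pow_middle (s : ℕ) :
    polyInt (rodrigues (2 * s) (2 * s) * rodrigues s 0) =
      2 ^ (4 * s + 1) * ((2 * s).factorial : ℝ) ^ 3 / (4 * s + 1).factorial := by
  rw [polyInt_rodrigues_mul _ _ le_rfl, rodrigues_zero s]
  change _ * polyInt (_ * rodrigues s (2 * s)) = _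
  rw [rodrigues_top, mul_comm (rodrigues _ _), polyInt_natCast_mul, polyInt_rodrigues_zero,
    show 2 * (2 * s) + 1 = 4 * s + 1 by ring]
  simp only [pow_mul, neg_one_sq, one_pow]
  ring

lemma polyInt_pow (p k : ℕ) : polyInt (rodrigues p p * rodrigues k 0) =
    (-1) ^ k * 2 ^ (p + 1) * (p.factorial : ℝ) ^ 3 * 4 ^ k * (k.factorial : ℝ) ^ 4 /
      (2 * k + p + 1).factorial * racahSum p k 0 := by
  have middle : ∀ s, polyInt (rodrigues (2 * s) (2 * s) * rodrigues s 0) =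
      (-1) ^ s * 2 ^ (2 * s + 1) * ((2 * s).factorial : ℝ) ^ 3 * 4 ^ s * (s.factorial : ℝ) ^ 4 /
        (2 * s + 2 * s + 1).factorial * racahSum (2 * s) s 0 := by
    intro s
    have h : (s.factorial : ℝ) ≠ 0 := by positivity
    have h1 : ((-1 : ℝ) ^ s) * (-1) ^ s = 1 := by rw [← mul_pow]; simp
    have h2 : (4 : ℝ) ^ s = 2 ^ (2 * s) := by rw [pow_mul]; norm_num
    rw [polyInt_pow_middle, racahSum_two_mul, rfact_natCast, h2,
      show 2 * s + 2 * s + 1 = 4 * s + 1 by ring]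
    field_simp
    rw [pow_two, h1, show 4 * s + 1 = (2 * s + 1) + 2 * s by ring, pow_add]
    ring
  induction k with
  | zero =>
    rcases eq_or_ne p 0 with rfl | hp
    · exact middle 0
    · rw [polyInt_pow_zero hp, racahSum_eq_zero (by omega), mul_zero]
  | succ k ih =>
    rcases eq_or_ne p (2 * (k + 1)) with rfl | hp
    · exact middle (k + 1)
    · have h := polyInt_pow_recurrence p k
      have hr := racahSum_zero_recurrence p k
      rw [ih] at h
      have hp' : ((p : ℝ) - 2 * k - 2) ≠ 0 := by
        intro h0
        apply hp
        have : (p : ℝ) = (2 * (k + 1) : ℕ) := by push_cast; linarith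
        exact_mod_cast this
      have h1 : ((p : ℝ) - 2 * k - 2) * (p + 2 * k + 3) ≠ 0 := mul_ne_zero hp' (by positivity)
      apply mul_left_cancel₀ h1
      rw [h, show 2 * (k + 1) + p + 1 = 2 * k + p + 1 + 1 + 1 by ring,
        Nat.factorial_succ (2 * k + p + 1 + 1), Nat.factorial_succ (2 * k + p + 1),
        Nat.factorial_succ k]
      have h2 : ((2 * k + p + 1).factorial : ℝ) ≠ 0 := by positivity
      push_cast
      have h3 : (2 * (k : ℝ) + 2 + p) ≠ 0 := by positivity
      have h4 : (2 * (k : ℝ) + p + 1 + 1) ≠ 0 := by positivity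
      have h5 : (2 * (k : ℝ) + p + 1 + 1 + 1) ≠ 0 := by positivity
      rw [show racahSum p k 0 = (2 * (k : ℝ) + 2 - p) * (k + 1) ^ 2 * racahSum p (k + 1) 0 /
        (2 * k + 2 + p) by rw [hr]; field_simp]
      field_simp
      ring

lemma polyInt_triple_recurrence (p k i j : ℕ) (h : i + j = 2 * k) :
    ((p : ℝ) * (p + 1) - j * (i + 1) - (j + 1) * i) *
        polyInt (rodrigues p p * (rodrigues k i * rodrigues k j)) =
      i * (j + 1) * polyInt (rodrigues p p * (rodrigues k (i - 1) * rodrigues k (j + 1))) +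
      j * (i + 1) * polyInt (rodrigues p p * (rodrigues k (i + 1) * rodrigues k (j - 1))) := by
  have h := polyInt_legendreOp (rodrigues p p) (rodrigues k i * rodrigues k j)
  rw [legendreOp_self, legendreOp_mul k i j ‹_›, mul_add, mul_add,
    mul_left_comm _ (Nat.cast _), mul_left_comm _ (Nat.cast _), mul_left_comm _ (Nat.cast _),
    polyInt_add, polyInt_add, mul_assoc (Nat.cast _), polyInt_natCast_mul, polyInt_natCast_mul,
    polyInt_natCast_mul, polyInt_natCast_mul] at h
  push_cast at h
  linear_combination -h

lemma polyInt_triple_aux (p k i j : ℕ) (h : i + j = 2 * k) (E : ℝ)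
    (hE : polyInt (rodrigues p p * (rodrigues k 0 * rodrigues k (2 * k))) =
      E * (2 * k).factorial * racahSum p k (-k)) :
    polyInt (rodrigues p p * (rodrigues k i * rodrigues k j)) =
      E * (-1) ^ i * j.factorial * i.factorial * racahSum p k (i - k) := by
  induction i using Nat.strong_induction_on generalizing j with
  | _ i ih =>
    rcases i with _ | i
    · obtain rfl : j = 2 * k := by omega
      rw [hE]; simp
    · have hr := polyInt_triple_recurrence p k i (j + 1) (by omega)
      have hu := racahSum_recurrence p k (i - k)
      have h0 := ih i (by omega) (j + 1) (by omega)
      have hk : (k : ℝ) = (i + 1 + j) / 2 := by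
        have : ((i + 1 + j : ℕ) : ℝ) = (2 * k : ℕ) := by exact_mod_cast h
        push_cast at this; linarith
      have h1 : (i : ℝ) * polyInt (rodrigues p p * (rodrigues k (i - 1) * rodrigues k (j + 1 + 1)))
          = - (E * (-1) ^ i * (j + 1 + 1).factorial * i.factorial * racahSum p k (i - k - 1)) := by
        rcases i with _ | i
        · rw [racahSum_of_add_neg (by push_cast; omega)]; simp
        · rw [Nat.add_sub_cancel, ih i (by omega) (j + 1 + 1) (by omega), Nat.factorial_succ i,
            show ((i + 1 : ℕ) : ℤ) - k - 1 = i - k by push_cast; ring]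
          push_cast
          ring
      have h2 : ((j : ℝ) + 1) * (i + 1) ≠ 0 := by positivity
      apply mul_left_cancel₀ h2
      have e1 : (k : ℝ) - (i - k) = j + 1 := by rw [hk]; ring
      have e2 : (k : ℝ) + (i - k) = i := by ring
      rw [Nat.add_sub_cancel] at hr
      rw [Nat.factorial_succ] at h0
      rw [Nat.factorial_succ (j + 1), Nat.factorial_succ j] at h1
      rw [Nat.factorial_succ i, show ((i + 1 : ℕ) : ℤ) - k = i - k + 1 by push_cast; ring]
      push_cast at hr h0 h1 hu ⊢
      rw [e1, e2] at hu
      linear_combination -hr + (p * (p + 1) - (j + 1) * (i + 1) - (j + 1 + 1) * i) * h0 -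
        (j + 2) * h1 + E * (-1) ^ i * (j + 1) * j.factorial * i.factorial * hu

lemma polyInt_triple (p k i j : ℕ) (h : i + j = 2 * k) :
    polyInt (rodrigues p p * (rodrigues k i * rodrigues k j)) =
      2 ^ (p + 1) * 4 ^ k * (p.factorial : ℝ) ^ 5 * (k.factorial : ℝ) ^ 4 * fact' (2 * k - p) /
        (2 * k + p + 1).factorial * (-1) ^ k * racahSum p k 0 *
      (-1) ^ i * j.factorial * i.factorial * racahSum p k (i - k) := by
  apply polyInt_triple_aux p k i j h
  rw [rodrigues_top, mul_comm (rodrigues k 0), mul_left_comm, polyInt_natCast_mul, polyInt_pow]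
  rcases lt_or_ge (2 * k) p with hp | hp
  · simp [racahSum_eq_zero hp]
  · have e : (2 * k - p : ℤ) = (2 * k - p : ℕ) := by omega
    rw [racahSum_neg_self, rfact_natCast, e, rfact_natCast, fact'_natCast]
    field_simp

lemma w3j_eq (p k : ℕ) (m : ℤ) (hm : |m| ≤ k) : w3j p k k 0 m (-m) =
    (-1) ^ (p + k) * (-1) ^ m *
      Real.sqrt (p.factorial ^ 4 * fact' (2 * k - p) / (2 * k + p + 1).factorial) *
      fact' (k - m) * fact' (k + m) * racahSum p k m := by
  rcases lt_or_ge (2 * k) p with hp | hp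
  · rw [racahSum_eq_zero hp, mul_zero, w3j, if_neg]
    rintro ⟨-, -, -, -, -, h⟩
    have := abs_le.1 h
    omega
  · have hs : ∑ t ∈ Finset.range (p + k + k + 1),
        (-1 : ℝ) ^ t /
          (fact' t * fact' ((k : ℤ) - k + 0 + t) * fact' ((k : ℤ) - p - m + t) *
            fact' ((p : ℤ) + k - k - t) * fact' ((p : ℤ) - 0 - t) *
            fact' ((k : ℤ) + m - t)) = racahSum p k m := by
      rw [racahSum]
      symm
      have hsub : Finset.range (p + 1) ⊆ Finset.range (p + k + k + 1) :=
        Finset.range_subset_range.2 (by omega)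
      rw [Finset.sum_subset hsub]
      · refine Finset.sum_congr rfl fun t _ => ?_
        rw [sub_self, add_zero, zero_add, add_sub_cancel_right, sub_zero]
        simp only [rfact, div_eq_mul_inv, mul_inv]
        ring
      · intro t _ ht
        rw [Finset.mem_range] at ht
        rw [rfact_of_neg (z := (p : ℤ) - t) (by omega)]
        simp
    have hc := abs_le.1 hm
    rw [w3j, if_pos, hs]
    · have e1 : (-1 : ℝ) ^ ((p : ℤ) - k - -m) = (-1) ^ (p + k) * (-1) ^ m := by
        rw [sub_neg_eq_add, zpow_add₀ (by norm_num), zpow_sub₀ (by norm_num), zpow_natCast,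
          zpow_natCast, pow_add, div_eq_mul_inv]
        congr 2
        rw [← inv_pow]; norm_num
      have h1 : 0 ≤ fact' (k - m) := by unfold fact'; split_ifs <;> positivity
      have h2 : 0 ≤ fact' (k + m) := by unfold fact'; split_ifs <;> positivity
      have e2 : Real.sqrt ((fact' ((p : ℤ) + k - k) * fact' ((p : ℤ) - k + k) *
          fact' (-(p : ℤ) + k + k) * fact' ((p : ℤ) - 0) * fact' ((p : ℤ) + 0) *
          fact' ((k : ℤ) - m) * fact' ((k : ℤ) + m) * fact' ((k : ℤ) - -m) *
          fact' ((k : ℤ) + -m)) / fact' ((p : ℤ) + k + k + 1)) =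
          Real.sqrt (p.factorial ^ 4 * fact' (2 * k - p) / (2 * k + p + 1).factorial) *
          (fact' (k - m) * fact' (k + m)) := by
        rw [← Real.sqrt_sq (mul_nonneg h1 h2), ← Real.sqrt_mul' _ (sq_nonneg _),
          show (p : ℤ) + k + k + 1 = (2 * k + p + 1 : ℕ) by
            push_cast; ring, add_sub_cancel_right, sub_add_cancel, sub_zero, add_zero,
          sub_neg_eq_add, ← sub_eq_add_neg, show -(p : ℤ) + k + k = 2 * k - p by ring,
          fact'_natCast, fact'_natCast]
        congr 1
        ring
      rw [e1, e2]
      ring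
    · refine ⟨by ring, by simp, hm, by rwa [abs_neg], by omega, abs_le.2 ⟨by omega, by omega⟩⟩

/-- The Gaunt integral of Legendre functions in terms of Wigner symbols. -/
lemma polyInt_triple_eq_w3j (p k m : ℕ) (h : m ≤ k) :
    polyInt (rodrigues p p * (rodrigues k (k + m) * rodrigues k (k - m))) =
      2 * (2 ^ p * p.factorial) * (2 ^ k * k.factorial) ^ 2 *
        (w3j p k k 0 0 0 * w3j p k k 0 m (-m)) := by
  have h0 := w3j_eq p k 0 (by simp)
  rw [neg_zero] at h0
  rw [polyInt_triple _ _ _ _ (by omega), h0, w3j_eq p k m (by simpa using h)]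
  have hf : 0 ≤ fact' (2 * k - p) := by unfold fact'; split_ifs <;> positivity
  have hs := Real.mul_self_sqrt (show 0 ≤ (p.factorial : ℝ) ^ 4 * fact' (2 * k - p) /
    (2 * k + p + 1).factorial by positivity)
  set S := Real.sqrt ((p.factorial : ℝ) ^ 4 * fact' (2 * k - p) / (2 * k + p + 1).factorial)
  have e1 : ((k : ℤ) - m) = (k - m : ℕ) := by omega
  have e2 : ((k : ℤ) + m) = (k + m : ℕ) := by push_cast; ring
  have e3 : ((k + m : ℕ) : ℤ) - k = m := by push_cast; ring
  rw [e1, e2, e3, sub_zero, add_zero, fact'_natCast, fact'_natCast, fact'_natCast,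
    zpow_natCast, zpow_zero]
  have e4 : (4 : ℝ) ^ k = 2 ^ k * 2 ^ k := by rw [← mul_pow]; norm_num
  have e6 : ((-1 : ℝ) ^ p) * (-1) ^ p = 1 := by rw [← mul_pow]; simp
  rw [e4, pow_succ, pow_add, pow_add]
  linear_combination (-(2 * 2 ^ p * 2 ^ k * 2 ^ k * p.factorial * k.factorial ^ 4 *
    racahSum p k 0 * racahSum p k m * (k - m).factorial * (k + m).factorial * (-1) ^ m *
    ((-1) ^ k * (-1) ^ k))) * (hs + S * S * e6)

lemma iteratedDeriv_eq_rodrigues (k j : ℕ) (x : ℝ) :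
    iteratedDeriv j (fun y : ℝ => (y ^ 2 - 1) ^ k) x = (rodrigues k j).eval x := by
  have h : ∀ (j : ℕ) (q : ℝ[X]), deriv^[j] (fun y => q.eval y) =
      fun y => (derivative^[j] q).eval y := by
    intro j
    induction j with
    | zero => intro q; rfl
    | succ j ih =>
      intro q
      rw [Function.iterate_succ_apply, Function.iterate_succ_apply, ← ih]
      congr 1
      ext y
      exact q.deriv
  rw [iteratedDeriv_eq_iterate, rodrigues, ← congrFun (h j _) x]
  simp

lemma assocLegendre_zero (p : ℕ) (x : ℝ) :
    assocLegendre p 0 x = (rodrigues p p).eval x / (2 ^ p * p.factorial) := by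
  rw [assocLegendre, iteratedDeriv_eq_rodrigues]
  simp
  ring

lemma assocLegendre_pos (k m : ℕ) (x : ℝ) : assocLegendre k m x =
    (-1) ^ m / (2 ^ k * k.factorial) * (1 - x ^ 2) ^ ((m : ℝ) / 2) *
      (rodrigues k (k + m)).eval x := by
  rw [assocLegendre, iteratedDeriv_eq_rodrigues, show ((m : ℤ) + k).toNat = k + m by omega]
  simp

lemma assocLegendre_neg (k m : ℕ) (h : m ≤ k) {x : ℝ} (hx : 0 ≤ 1 - x ^ 2) :
    assocLegendre k (-m) x =
    (-1) ^ m / (2 ^ k * k.factorial) * ((1 - x ^ 2) ^ ((m : ℝ) / 2))⁻¹ *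
      (rodrigues k (k - m)).eval x := by
  rw [assocLegendre, iteratedDeriv_eq_rodrigues, show (-(m : ℤ) + k).toNat = k - m by omega,
    zpow_neg, zpow_natCast, ← inv_pow, show (-1 : ℝ)⁻¹ = -1 by norm_num, ← Real.rpow_neg hx]
  push_cast
  rw [neg_div]

/-- The azimuth-free part of the real harmonic of degree `k` and order `m > 0`. -/
noncomputable def polarFactor (k m : ℕ) (θ : ℝ) : ℝ :=
  (Real.sqrt ((2 * k + 1) / (4 * Real.pi) * (fact' (k - -m) / fact' (k + -m))) *
      assocLegendre k (-m) (Real.cos θ) +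
    (-1) ^ m * (Real.sqrt ((2 * k + 1) / (4 * Real.pi) * (fact' (k - m) / fact' (k + m))) *
      assocLegendre k m (Real.cos θ))) / Real.sqrt 2

lemma Yre_pos (k m : ℕ) (hm : 0 < m) (θ φ : ℝ) :
    Yre k m θ φ = polarFactor k m θ * Real.cos (m * φ) := by
  have h1 : ∀ z : ℂ, (1 / (Real.sqrt 2 : ℂ) * z).re = z.re / Real.sqrt 2 := by
    intro z
    rw [← Complex.ofReal_one, ← Complex.ofReal_div, Complex.re_ofReal_mul]
    ring
  have h2 : ∀ (a : ℝ) (n : ℤ), ((a : ℂ) * Complex.exp (Complex.I * n * φ)).re =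
      a * Real.cos (n * φ) := by
    intro a n
    rw [Complex.re_ofReal_mul, show Complex.I * (n : ℂ) * φ = ((n * φ : ℝ) : ℂ) * Complex.I by
      push_cast; ring, Complex.exp_ofReal_mul_I_re]
  have h3 : ∀ z : ℂ, ((-1 : ℂ) ^ (m : ℤ) * z).re = (-1) ^ m * z.re := by
    intro z
    rw [zpow_natCast, show (-1 : ℂ) ^ m = (((-1) ^ m : ℝ) : ℂ) by push_cast; rfl,
      Complex.re_ofReal_mul]
  rw [Yre, if_neg (by omega), if_neg (by omega), h1, Complex.add_re, h3, Ysph, Ysph, h2, h2,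
    polarFactor]
  push_cast
  rw [neg_mul, Real.cos_neg]
  ring

lemma Yre_zero (p : ℕ) (θ φ : ℝ) : Yre p 0 θ φ =
    Real.sqrt ((2 * p + 1) / (4 * Real.pi)) *
      ((rodrigues p p).eval (Real.cos θ) / (2 ^ p * p.factorial)) := by
  have : (p.factorial : ℝ) ≠ 0 := by positivity
  rw [Yre, if_neg (by omega), if_pos rfl, Ysph, assocLegendre_zero, sub_zero, add_zero,
    fact'_natCast, div_self this, mul_one]
  simp only [Int.cast_zero, mul_zero, zero_mul, Complex.exp_zero, mul_one]
  exact Complex.ofReal_re _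

lemma polarFactor_sq (k m : ℕ) (h : m ≤ k) {θ : ℝ} (hθ : Real.sin θ ≠ 0) :
    polarFactor k m θ ^ 2 = (-1) ^ m * ((2 * k + 1) / (2 * Real.pi)) /
      (2 ^ k * k.factorial) ^ 2 *
      ((rodrigues k (k + m) * rodrigues k (k - m)).eval (Real.cos θ)) := by
  have hr := congrArg (eval (Real.cos θ)) (rodrigues_reflect k m h)
  have hs : (0 : ℝ) < 1 - Real.cos θ ^ 2 := by rw [← Real.sin_sq]; positivity
  have hx : (Real.cos θ ^ 2 - 1) ^ m = (-1) ^ m * (1 - Real.cos θ ^ 2) ^ m := by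
    rw [← mul_pow]; ring
  simp only [eval_mul, eval_pow, eval_sub, eval_X, eval_one, eval_natCast, hx] at hr
  have hp : (1 - Real.cos θ ^ 2) ^ m = ((1 - Real.cos θ ^ 2) ^ ((m : ℝ) / 2)) ^ 2 := by
    rw [← Real.rpow_natCast _ m, ← Real.rpow_mul_natCast hs.le]
    congr 1; push_cast; ring
  have hq : (1 - Real.cos θ ^ 2) ^ ((m : ℝ) / 2) ≠ 0 := (Real.rpow_pos_of_pos hs _).ne'
  rw [hp] at hr
  rw [polarFactor, assocLegendre_pos, assocLegendre_neg k m h hs.le, eval_mul]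
  have e1 : ((k : ℤ) - m) = (k - m : ℕ) := by omega
  have e2 : ((k : ℤ) + m) = (k + m : ℕ) := by push_cast; ring
  rw [sub_neg_eq_add, ← sub_eq_add_neg, e1, e2, fact'_natCast, fact'_natCast]
  generalize (rodrigues k (k + m)).eval (Real.cos θ) = A at hr ⊢
  generalize (rodrigues k (k - m)).eval (Real.cos θ) = B at hr ⊢
  generalize (1 - Real.cos θ ^ 2) ^ ((m : ℝ) / 2) = y at hr hq ⊢
  have ha : (0 : ℝ) < (k + m).factorial := by positivity
  have hb : (0 : ℝ) < (k - m).factorial := by positivity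
  generalize ((k + m).factorial : ℝ) = a at hr ha ⊢
  generalize ((k - m).factorial : ℝ) = b at hr hb ⊢
  have hc : (0 : ℝ) < (2 * k + 1) / (4 * Real.pi) := by positivity
  have e3 : (2 * (k : ℝ) + 1) / (2 * Real.pi) = 2 * ((2 * k + 1) / (4 * Real.pi)) := by
    field_simp; norm_num
  rw [e3]
  generalize (2 * (k : ℝ) + 1) / (4 * Real.pi) = c at hc ⊢
  have hd : (2 : ℝ) ^ k * k.factorial ≠ 0 := by positivity
  generalize (2 : ℝ) ^ k * k.factorial = d at hd ⊢
  have e4 : Real.sqrt (c * (b / a)) = Real.sqrt (c * (a / b)) * (b / a) := by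
    rw [← Real.sqrt_sq (show 0 ≤ b / a by positivity), ← Real.sqrt_mul' _ (sq_nonneg _),
      Real.sqrt_sq (show 0 ≤ b / a by positivity)]
    congr 1
    field_simp
  have hm2 : ((-1 : ℝ) ^ m) * (-1) ^ m = 1 := by rw [← mul_pow]; simp
  generalize (-1 : ℝ) ^ m = e at hr hm2 ⊢
  have hS := Real.sq_sqrt (show 0 ≤ c * (a / b) by positivity)
  have hB' : B = b / a * (e * y ^ 2 * A) := by
    field_simp; linear_combination hr
  rw [e4, hB', div_pow, Real.sq_sqrt zero_le_two]
  generalize Real.sqrt (c * (a / b)) = S at hS ⊢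
  have : (S * (e / d * y⁻¹ * (b / a * (e * y ^ 2 * A))) + e * (S * (b / a) * (e / d * y * A))) =
      S * (2 * (e * e) * (b / a) / d * y * A) := by
    field_simp; ring
  rw [this, hm2, mul_pow, hS]
  field_simp
  linear_combination -A ^ 2 * hm2

lemma integral_cos_mul_cos (m n : ℕ) (hm : 0 < m) (hn : 0 < n) :
    ∫ φ in (0 : ℝ)..(2 * Real.pi), Real.cos (m * φ) * Real.cos (n * φ) =
      if m = n then Real.pi else 0 := by
  have key : ∀ c : ℤ, ∫ φ in (0 : ℝ)..(2 * Real.pi), Real.cos (c * φ) =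
      if c = 0 then 2 * Real.pi else 0 := by
    intro c
    split_ifs with hc
    · simp [hc]
    · have hc' : (c : ℝ) ≠ 0 := by exact_mod_cast hc
      rw [intervalIntegral.integral_comp_mul_left _ hc', integral_cos]
      have : Real.sin ((c : ℝ) * (2 * Real.pi)) = 0 := by
        have := Real.sin_int_mul_pi (2 * c)
        push_cast at this
        rw [← this]; ring_nf
      simp [this]
  have h : ∀ φ : ℝ, Real.cos (m * φ) * Real.cos (n * φ) =
      (1 / 2) * Real.cos (((m - n : ℤ) : ℝ) * φ) + (1 / 2) * Real.cos (((m + n : ℤ) : ℝ) * φ) := by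
    intro φ
    push_cast
    rw [sub_mul, add_mul, Real.cos_sub, Real.cos_add]
    ring
  simp_rw [h]
  rw [intervalIntegral.integral_add
      ((by fun_prop : Continuous _).intervalIntegrable _ _)
      ((by fun_prop : Continuous _).intervalIntegrable _ _),
    intervalIntegral.integral_const_mul, intervalIntegral.integral_const_mul, key, key,
    if_neg (by omega : ((m : ℤ) + n) ≠ 0)]
  by_cases hmn : m = n
  · simp [hmn]
  · rw [if_neg (by omega), if_neg hmn]; simp

lemma integral_eval_cos_mul_sin (q : ℝ[X]) :
    ∫ θ in (0 : ℝ)..Real.pi, q.eval (Real.cos θ) * Real.sin θ = polyInt q := by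
  have h := intervalIntegral.integral_comp_mul_deriv (a := 0) (b := Real.pi)
    (f := Real.cos) (f' := fun θ => -Real.sin θ) (g := fun x => q.eval x)
    (fun x _ => Real.hasDerivAt_cos x) (by fun_prop) (by fun_prop)
  simp only [Function.comp, Real.cos_zero, Real.cos_pi, mul_neg,
    intervalIntegral.integral_neg] at h
  rw [polyInt, intervalIntegral.integral_symm 1 (-1), ← h, neg_neg]

/-- For `m, n > 0`, `W^{p,k}_{0,m,n} = δ_{m,n} C_{p,k} (−1)^m (p k k; 0 0 0)(p k k; 0 m −m)`,
where `C_{p,k} = (2k+1)√(2p+1)/√(4π)`. -/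
theorem tripleProduct_q_zero (p k : ℕ) (m n : ℤ)
    (hm : 0 < m) (hm' : m ≤ (k : ℤ)) (hn : 0 < n) (hn' : n ≤ (k : ℤ)) :
    sphInt (fun θ φ => Yre p 0 θ φ * Yre k m θ φ * Yre k n θ φ) =
      (if m = n then 1 else 0) *
        ((2 * (k : ℝ) + 1) * Real.sqrt (2 * p + 1) / Real.sqrt (4 * Real.pi)) *
        (-1 : ℝ) ^ m * w3j p k k 0 0 0 * w3j p k k 0 m (-m) := by

  lift m to ℕ using hm.le
  lift n to ℕ using hn.le
  norm_cast at hm hm' hn hn'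
  have hsep : sphInt (fun θ φ => Yre p 0 θ φ * Yre k m θ φ * Yre k n θ φ) =
      (∫ θ in (0 : ℝ)..Real.pi, Yre p 0 θ 0 * polarFactor k m θ * polarFactor k n θ * Real.sin θ) *
        if m = n then Real.pi else 0 := by
    rw [sphInt, ← intervalIntegral.integral_mul_const]
    congr 1
    ext θ
    rw [← integral_cos_mul_cos m n hm hn, ← intervalIntegral.integral_const_mul]
    congr 1
    ext φ
    rw [Yre_pos k m hm, Yre_pos k n hn, Yre_zero, Yre_zero]
    ring
  rw [hsep]
  simp only [Nat.cast_inj]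
  split_ifs with hmn
  · subst hmn
    have hint : ∀ θ : ℝ, Yre p 0 θ 0 * polarFactor k m θ * polarFactor k m θ * Real.sin θ =
        Real.sqrt ((2 * p + 1) / (4 * Real.pi)) / (2 ^ p * p.factorial) *
          ((-1) ^ m * ((2 * k + 1) / (2 * Real.pi)) / (2 ^ k * k.factorial) ^ 2) *
          ((rodrigues p p * (rodrigues k (k + m) * rodrigues k (k - m))).eval (Real.cos θ) *
            Real.sin θ) := by
      intro θ
      by_cases hθ : Real.sin θ = 0
      · simp [hθ]
      · rw [mul_assoc (Yre p 0 θ 0), ← pow_two, polarFactor_sq k m hm' hθ, Yre_zero,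
          eval_mul (p := rodrigues p p)]
        ring
    simp_rw [hint]
    rw [intervalIntegral.integral_const_mul, integral_eval_cos_mul_sin,
      polyInt_triple_eq_w3j p k m hm', Real.sqrt_div (by positivity), zpow_natCast]
    have h1 : (p.factorial : ℝ) ≠ 0 := by positivity
    have h2 : (k.factorial : ℝ) ≠ 0 := by positivity
    field_simp
  · simp
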